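/- Let r,s ∈ (4/3,∞] and ν₀ > 0. If 5/(3r) + 2/s < 1, then the set of data u₀ ∈ L²_σ for which there exist T > 0 and a weak solution u ∈ W_{ν₀}(u₀) with ‖u‖_{L^r(0,T;L^s)} < ∞ is meagre in L²_σ. -/

import Mathlib

open MeasureTheory ENNReal Set Filter

noncomputable section

abbrev E3 : Type := EuclideanSpace ℝ (Fin 3)

/-- Spatial partial derivative of a scalar function in the `j`-th coordinate direction. -/
def pd (f : E3 → ℝ) (j : Fin 3) (x : E3) : ℝ :=
  fderiv ℝ f x (EuclideanSpace.single j 1)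

/-- Divergence-free in the sense of distributions. -/
def IsDivFree (v : E3 → E3) : Prop :=
  ∀ φ : E3 → ℝ, ContDiff ℝ (⊤ : ℕ∞) φ → HasCompactSupport φ →
    ∫ x : E3, ∑ i, v x i * pd φ i x = 0

/-- The space-time measure on `(0,∞) × ℝ³`. -/
def μST : Measure (ℝ × E3) := (volume.restrict (Ioi (0:ℝ))).prod volume

/-- Mixed norm `L^r(I; L^s)`. -/
def mixedNorm (r s : ℝ≥0∞) (I : Set ℝ) (u : ℝ → E3 → E3) : ℝ≥0∞ :=
  if r = ∞ then essSup (fun t => eLpNorm (u t) s volume) (volume.restrict I)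
  else (∫⁻ t in I, (eLpNorm (u t) s volume) ^ r.toReal) ^ (1 / r.toReal)

/-- Squared spatial `L²` norm of the (matrix-valued) gradient at time `t`. -/
def gradSq (G : ℝ → E3 → Fin 3 → Fin 3 → ℝ) (t : ℝ) : ℝ≥0∞ :=
  ∫⁻ x : E3, ∑ i, ∑ j, ENNReal.ofReal ((G t x i j) ^ 2)

/-- `L²((0,∞); L²)` norm of the gradient. -/
def gradL2 (G : ℝ → E3 → Fin 3 → Fin 3 → ℝ) : ℝ≥0∞ :=
  (∫⁻ t in Ioi (0:ℝ), gradSq G t) ^ (1/2 : ℝ)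

/-- `G` is the distributional spatial gradient of `u` on `ℝ³ × (0,∞)`. -/
def IsDistGrad (u : ℝ → E3 → E3) (G : ℝ → E3 → Fin 3 → Fin 3 → ℝ) : Prop :=
  ∀ ψ : ℝ × E3 → ℝ, ContDiff ℝ (⊤ : ℕ∞) ψ → HasCompactSupport ψ →
    tsupport ψ ⊆ {p | 0 < p.1} → ∀ i j,
    (∫ p, u p.1 p.2 i * pd (fun y => ψ (p.1, y)) j p.2 ∂μST)
      = - ∫ p, G p.1 p.2 i j * ψ p ∂μST

/-- Admissible space-time test function: smooth, compactly supported in `ℝ³ × [0,∞)`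
and divergence-free. -/
def IsTest (φ : ℝ × E3 → E3) : Prop :=
  ContDiff ℝ (⊤ : ℕ∞) φ ∧ HasCompactSupport φ ∧
    ∀ p : ℝ × E3, ∑ i, pd (fun y => φ (p.1, y) i) i p.2 = 0

def timeDeriv (φ : ℝ × E3 → E3) (p : ℝ × E3) (i : Fin 3) : ℝ :=
  deriv (fun τ => φ (τ, p.2) i) p.1

def spaceLap (φ : ℝ × E3 → E3) (p : ℝ × E3) (i : Fin 3) : ℝ :=
  ∑ j, pd (fun y => pd (fun z => φ (p.1, z) i) j y) j p.2

def spaceGrad (φ : ℝ × E3 → E3) (p : ℝ × E3) (i j : Fin 3) : ℝ :=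
  pd (fun y => φ (p.1, y) i) j p.2

/-- Weak solution of the Navier–Stokes equations on `ℝ³ × (0,∞)` with viscosity `ν`,
datum `u₀` and distributional spatial gradient `G`. -/
def IsWeakNS (ν : ℝ) (u₀ : E3 → E3) (u : ℝ → E3 → E3)
    (G : ℝ → E3 → Fin 3 → Fin 3 → ℝ) : Prop :=
  AEStronglyMeasurable (Function.uncurry u) μST ∧
  mixedNorm ∞ 2 (Ioi 0) u < ∞ ∧
  (∀ᵐ t ∂(volume.restrict (Ioi (0:ℝ))), IsDivFree (u t)) ∧
  AEStronglyMeasurable (Function.uncurry G) μST ∧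
  (∫⁻ t in Ioi (0:ℝ), gradSq G t) < ∞ ∧
  IsDistGrad u G ∧
  ∀ φ : ℝ × E3 → E3, IsTest φ →
    (∫ p,
        ((∑ i, u p.1 p.2 i * (timeDeriv φ p i + ν * spaceLap φ p i)) +
         ∑ i, ∑ j, u p.1 p.2 i * u p.1 p.2 j * spaceGrad φ p i j) ∂μST)
      = - ∫ x : E3, ∑ i, u₀ x i * φ (0, x) i

/-- Leray–Hopf solution: weak solution satisfying the energy inequality. -/
def IsLerayHopf (ν : ℝ) (u₀ : E3 → E3) (u : ℝ → E3 → E3)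
    (G : ℝ → E3 → Fin 3 → Fin 3 → ℝ) : Prop :=
  IsWeakNS ν u₀ u G ∧
  ∀ᵐ t ∂(volume.restrict (Ioi (0:ℝ))),
    ENNReal.ofReal (1/2) * (eLpNorm (u t) 2 volume) ^ (2:ℕ)
        + ENNReal.ofReal ν * ∫⁻ τ in Ioc (0:ℝ) t, gradSq G τ
      ≤ ENNReal.ofReal (1/2) * (eLpNorm u₀ 2 volume) ^ (2:ℕ)

/-- `L²_σ`: divergence-free fields in `L²(ℝ³;ℝ³)`, as a subset of `L²`. -/
def L2σ : Set (Lp E3 2 (volume : Measure E3)) := {v | IsDivFree ⇑v}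

/-!
Fix a divergence-free test field `ψ ≠ 0` and test the equation with the fields `χ(d t) ψ(c x)`,
where `χ` is a cutoff near `t = 0` and `c² ≤ d`. If `u ∈ L^r(0,T;L^s)`, Hölder's inequality bounds
the linear terms by a multiple of `c^{-3(1-1/s)} d^{1/r}`, and the energy bound `u ∈ L^∞(L²)` bounds
the quadratic term by a multiple of `c/d`. Balancing the two through `d = c^{κ+1}` gives
`⟨u₀, ψ(c·)⟩ = O(c^{-κ})`, and `5/(3r) + 2/s < 1` is exactly what permits `κ > 3/2`. As
`‖ψ(c·)‖₂ = c^{-3/2} ‖ψ‖₂`, such a decay is faster than the norms of the functionals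
`⟨·, ψ(c·)⟩`, so by the quantitative form of Banach–Steinhaus it holds only on a meagre set of `u₀`.
-/

section BaireCategory

open Asymptotics

variable {𝕜 E α : Type*} [RCLike 𝕜] [NormedAddCommGroup E] [NormedSpace 𝕜 E]

lemma norm_le_of_mem_interior_setOf_norm_apply_le {f : α → StrongDual 𝕜 E} {b : α → ℝ} {s : Set α}
    {x : E} (hx : x ∈ interior {v | ∀ a ∈ s, ‖f a v‖ ≤ b a}) :
    ∃ C : ℝ, ∀ a ∈ s, ‖f a‖ ≤ C * b a := by
  obtain ⟨ε, hε, hball⟩ := Metric.nhds_basis_closedBall.mem_iff.1 (mem_interior_iff_mem_nhds.1 hx)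
  refine ⟨2 / ε, fun a ha => ?_⟩
  rw [div_mul_eq_mul_div]
  refine (f a).opNorm_bound_of_ball_bound hε _ fun w hw => ?_
  have hxw : ‖f a (x + w)‖ ≤ b a := hball (by simpa using hw) a ha
  have hx' : ‖f a x‖ ≤ b a := interior_subset hx a ha
  calc ‖f a w‖ = ‖f a (x + w) - f a x‖ := by simp
    _ ≤ ‖f a (x + w)‖ + ‖f a x‖ := norm_sub_le _ _
    _ ≤ 2 * b a := by linarith

lemma isMeagre_setOf_apply_isBigO {l : Filter α} [l.IsCountablyGenerated]
    {f : α → StrongDual 𝕜 E} {b : α → ℝ} (hfb : ¬ (fun a => ‖f a‖) =O[l] b) :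
    IsMeagre {v | (fun a => f a v) =O[l] b} := by
  obtain ⟨s, hs⟩ := l.exists_antitone_basis
  let A (m n : ℕ) : Set E := {v | ∀ a ∈ s n, ‖f a v‖ ≤ m * ‖b a‖}
  have hA_closed (m n : ℕ) : IsClosed (A m n) := by
    simp only [A, ofPred_forall]
    exact isClosed_biInter fun a _ => isClosed_le (by fun_prop) continuous_const
  have hA (m n : ℕ) : IsNowhereDense (A m n) := by
    rw [(hA_closed m n).isNowhereDense_iff, eq_empty_iff_forall_notMem]
    intro x hx
    obtain ⟨C, hC⟩ := norm_le_of_mem_interior_setOf_norm_apply_le hx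
    refine hfb (.of_bound (C * m) (mem_of_superset (hs.mem n) fun a ha => ?_))
    rw [mem_ofPred_eq, norm_norm, mul_assoc]
    exact hC a ha
  refine (isMeagre_iUnion fun m => isMeagre_iUnion fun n => (hA m n).isMeagre).mono fun v hv => ?_
  obtain ⟨C, hC⟩ := hv.bound
  obtain ⟨n, hn⟩ := hs.mem_iff.1 hC
  obtain ⟨m, hm⟩ := exists_nat_ge C
  exact mem_iUnion₂.2 ⟨m, n, fun a ha => (hn ha).trans (by gcongr)⟩

lemma not_rpow_isBigO_rpow {l : Filter α} [l.NeBot] {g : α → ℝ} (hg : Tendsto g l atTop)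
    {p q : ℝ} (h : q < p) : ¬ (fun a => g a ^ p) =O[l] fun a => g a ^ q := by
  intro hO
  have hpos : ∀ᶠ a in l, 0 < g a := hg.eventually_gt_atTop 0
  have ho : (fun a => g a ^ q) =o[l] fun a => g a ^ p := by
    refine isLittleO_of_tendsto' ?_ ?_
    · filter_upwards [hpos] with a ha h0
      exact absurd h0 (by positivity)
    · refine ((tendsto_rpow_neg_atTop (sub_pos.2 h)).comp hg).congr' ?_
      filter_upwards [hpos] with a ha
      rw [Function.comp_apply, ← Real.rpow_sub ha, neg_sub]
  refine isLittleO_irrefl ?_ (hO.trans_isLittleO ho)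
  exact (hpos.mono fun a ha => (Real.rpow_pos_of_pos ha p).ne').frequently

end BaireCategory

section MixedNormEstimates

variable {α β ε : Type*} [MeasurableSpace α] [MeasurableSpace β] [TopologicalSpace ε]
  [ContinuousENorm ε] {μ : Measure α} {ν : Measure β}

lemma one_div_toReal_le_one {p : ℝ≥0∞} (hp : 1 ≤ p) : 1 / p.toReal ≤ 1 := by
  rw [one_div, ← ENNReal.toReal_inv]
  exact ENNReal.toReal_le_of_le_ofReal zero_le_one (by simpa using hp)

lemma setLIntegral_enorm_le_eLpNorm_mul {f : α → ε} {p : ℝ≥0∞} (hp : 1 ≤ p) {A : Set α}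
    (hf : AEStronglyMeasurable f (μ.restrict A)) :
    ∫⁻ x in A, ‖f x‖ₑ ∂μ ≤ eLpNorm f p (μ.restrict A) * μ A ^ (1 - 1 / p.toReal) := by
  simpa [eLpNorm_one_eq_lintegral_enorm] using eLpNorm_le_eLpNorm_mul_rpow_measure_univ hp hf

variable [SFinite μ] [SFinite ν] {u : α → β → ε} {A : Set α} {B : Set β}

lemma setLIntegral_prod_enorm_le {r s : ℝ≥0∞} (hr : 1 ≤ r) (hs : 1 ≤ s) (hB : ν B ≠ ∞)
    (hu : AEStronglyMeasurable (Function.uncurry u) ((μ.prod ν).restrict (A ×ˢ B))) :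
    ∫⁻ p in A ×ˢ B, ‖u p.1 p.2‖ₑ ∂μ.prod ν ≤
      eLpNorm (fun t => eLpNorm (u t) s ν) r (μ.restrict A) * ν B ^ (1 - 1 / s.toReal) *
        μ A ^ (1 - 1 / r.toReal) := by
  rw [← Measure.prod_restrict] at hu ⊢
  set V := ν B ^ (1 - 1 / s.toReal)
  have hV : V ≠ ∞ :=
    ENNReal.rpow_ne_top_of_nonneg (sub_nonneg.2 (one_div_toReal_le_one hs)) hB
  let F (t : α) : ℝ≥0∞ := ∫⁻ x in B, ‖u t x‖ₑ ∂ν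
  have hF : AEMeasurable F (μ.restrict A) := hu.enorm.lintegral_prod_right'
  have hF_le : ∀ᵐ t ∂μ.restrict A, ‖F t‖ₑ ≤ V.toNNReal * ‖eLpNorm (u t) s ν‖ₑ := by
    filter_upwards [hu.prodMk_left] with t ht
    rw [ENNReal.coe_toNNReal hV, mul_comm]
    refine (setLIntegral_enorm_le_eLpNorm_mul hs ht).trans ?_
    gcongr
    exact eLpNorm_mono_measure _ Measure.restrict_le_self
  calc ∫⁻ p, ‖u p.1 p.2‖ₑ ∂(μ.restrict A).prod (ν.restrict B)
      = ∫⁻ t in A, ‖F t‖ₑ ∂μ := lintegral_prod _ hu.enorm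
    _ ≤ eLpNorm F r (μ.restrict A) * μ A ^ (1 - 1 / r.toReal) :=
        setLIntegral_enorm_le_eLpNorm_mul hr hF.aestronglyMeasurable
    _ ≤ _ := by
        gcongr
        refine (eLpNorm_le_nnreal_smul_eLpNorm_of_ae_le_mul' hF_le r).trans_eq ?_
        rw [ENNReal.smul_def, ENNReal.coe_toNNReal hV, smul_eq_mul, mul_comm]

lemma setLIntegral_prod_enorm_rpow_le {p : NNReal} (hp : p ≠ 0)
    (hu : AEStronglyMeasurable (Function.uncurry u) ((μ.prod ν).restrict (A ×ˢ B))) :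
    ∫⁻ z in A ×ˢ B, ‖u z.1 z.2‖ₑ ^ (p : ℝ) ∂μ.prod ν ≤
      essSup (fun t => eLpNorm (u t) p ν) (μ.restrict A) ^ (p : ℝ) * μ A := by
  rw [← Measure.prod_restrict] at hu ⊢
  calc ∫⁻ z, ‖u z.1 z.2‖ₑ ^ (p : ℝ) ∂(μ.restrict A).prod (ν.restrict B)
      = ∫⁻ t in A, ∫⁻ x in B, ‖u t x‖ₑ ^ (p : ℝ) ∂ν ∂μ := lintegral_prod _ (hu.enorm.pow_const _)
    _ ≤ ∫⁻ t in A, eLpNorm (u t) p ν ^ (p : ℝ) ∂μ := by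
        gcongr with t
        rw [eLpNorm_nnreal_pow_eq_lintegral hp]
        exact setLIntegral_le_lintegral _ _
    _ ≤ ∫⁻ _ in A, essSup (fun t => eLpNorm (u t) p ν) (μ.restrict A) ^ (p : ℝ) ∂μ := by
        refine lintegral_mono_ae ?_
        filter_upwards [ENNReal.ae_le_essSup fun t => eLpNorm (u t) p ν] with t ht
        gcongr
    _ = _ := setLIntegral_const _ _

end MixedNormEstimates

lemma eLpNorm_comp_smul {E F : Type*} [NormedAddCommGroup E] [NormedSpace ℝ E]
    [FiniteDimensional ℝ E] [MeasurableSpace E] [BorelSpace E] [NormedAddCommGroup F]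
    {μ : Measure E} [μ.IsAddHaarMeasure] {p : ℝ≥0∞} (hp : p ≠ ∞) {c : ℝ} (hc : 0 < c) (f : E → F) :
    eLpNorm (fun x => f (c • x)) p μ =
      ENNReal.ofReal (c ^ (-(Module.finrank ℝ E / p.toReal) : ℝ)) * eLpNorm f p μ := by
  have hemb : MeasurableEmbedding (c • · : E → E) :=
    (Homeomorph.smulOfNeZero c hc.ne').measurableEmbedding
  rw [show (fun x => f (c • x)) = f ∘ (c • ·) from rfl, ← hemb.eLpNorm_map_measure,
    Measure.map_addHaar_smul μ hc.ne', eLpNorm_smul_measure_of_ne_top hp, smul_eq_mul,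
    ENNReal.ofReal_rpow_of_pos (by positivity), abs_of_pos (by positivity), ← Real.rpow_natCast,
    ← Real.rpow_neg hc.le, ← Real.rpow_mul hc.le, one_div, ENNReal.toReal_inv, neg_mul,
    ← div_eq_mul_inv]

section PartialDerivatives

lemma contDiff_pd {f : E3 → ℝ} {m n : WithTop ℕ∞} (hf : ContDiff ℝ n f) (hmn : m + 1 ≤ n)
    (j : Fin 3) : ContDiff ℝ m (pd f j) :=
  (hf.fderiv_right hmn).clm_apply contDiff_const

lemma continuous_pd {f : E3 → ℝ} (hf : ContDiff ℝ 1 f) (j : Fin 3) : Continuous (pd f j) :=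
  (contDiff_pd hf (m := 0) (by simp) j).continuous

lemma tsupport_pd_subset (f : E3 → ℝ) (j : Fin 3) : tsupport (pd f j) ⊆ tsupport f :=
  tsupport_fderiv_apply_subset ℝ _

lemma hasCompactSupport_pd {f : E3 → ℝ} (hf : HasCompactSupport f) (j : Fin 3) :
    HasCompactSupport (pd f j) :=
  hf.of_isClosed_subset (isClosed_tsupport _) (tsupport_pd_subset f j)

lemma pd_comp_smul (f : E3 → ℝ) (c : ℝ) (j : Fin 3) (x : E3) :
    pd (fun y => f (c • y)) j x = c * pd f j (c • x) := by
  simp [pd, fderiv_comp_smul (𝕜 := ℝ) (f := f) c]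

lemma pd_const_mul (f : E3 → ℝ) (a : ℝ) (j : Fin 3) (x : E3) :
    pd (fun y => a * f y) j x = a * pd f j x := by
  change fderiv ℝ (a • f) x _ = _
  simp [pd, congrFun (fderiv_const_smul_field (𝕜 := ℝ) (f := f) a) x]

lemma pd_neg (f : E3 → ℝ) (j : Fin 3) (x : E3) : pd (fun y => -f y) j x = -pd f j x := by
  simp [pd, fderiv_fun_neg]

lemma pd_comm {f : E3 → ℝ} (hf : ContDiff ℝ 2 f) (i j : Fin 3) (x : E3) :
    pd (pd f i) j x = pd (pd f j) i x := by
  have hd : DifferentiableAt ℝ (fderiv ℝ f) x :=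
    (hf.fderiv_right (m := 1) (by norm_num)).differentiable one_ne_zero x
  have hpd (i j : Fin 3) : pd (pd f i) j x =
      fderiv ℝ (fderiv ℝ f) x (EuclideanSpace.single j 1) (EuclideanSpace.single i 1) := by
    change fderiv ℝ (fun y => fderiv ℝ f y (EuclideanSpace.single i 1)) x _ = _
    simp [fderiv_clm_apply hd]
  rw [hpd, hpd]
  exact (hf.contDiffAt.isSymmSndFDerivAt (by simp)).eq _ _

lemma eq_zero_of_pd_eq_zero {f : E3 → ℝ} (hf : Differentiable ℝ f) (hc : HasCompactSupport f)
    {j : Fin 3} (h : ∀ x, pd f j x = 0) (x : E3) : f x = 0 := by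
  let e : E3 := EuclideanSpace.single j 1
  have hline (t : ℝ) : HasDerivAt (fun t : ℝ => f (x + t • e)) 0 t := by
    have hl : HasDerivAt (fun t : ℝ => x + t • e) e t := by
      simpa using ((hasDerivAt_id t).smul_const e).const_add x
    exact h (x + t • e) ▸ (hf (x + t • e)).hasFDerivAt.comp_hasDerivAt t hl
  have hconst (t : ℝ) : f (x + t • e) = f x := by
    simpa using is_const_of_deriv_eq_zero (fun t => (hline t).differentiableAt)
      (fun t => (hline t).deriv) t 0
  have hiso : Isometry fun t : ℝ => x + t • e :=
    Isometry.of_dist_eq fun a b => by simp [e, dist_eq_norm, ← sub_smul, norm_smul]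
  have hcomp : HasCompactSupport (f ∘ fun t : ℝ => x + t • e) :=
    hc.comp_isClosedEmbedding hiso.isClosedEmbedding
  by_contra hx
  refine noncompact_univ ℝ ?_
  rwa [HasCompactSupport, tsupport, show f ∘ (fun t : ℝ => x + t • e) = fun _ => f x from
    funext hconst, Function.support_const hx, closure_univ] at hcomp

end PartialDerivatives

section DivergenceFree

lemma integrable_mul_pd {v : E3 → E3} (hv : LocallyIntegrable v) {φ : E3 → ℝ}
    (hφ : ContDiff ℝ 1 φ) (hc : HasCompactSupport φ) (i : Fin 3) :
    Integrable (fun x => v x i * pd φ i x) := by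
  have hvi : LocallyIntegrable (fun x => v x i) := hv.mono
    ((EuclideanSpace.proj (𝕜 := ℝ) i).continuous.comp_aestronglyMeasurable hv.aestronglyMeasurable)
    (.of_forall fun x => PiLp.norm_apply_le (v x) i)
  exact hvi.integrable_smul_right_of_hasCompactSupport (continuous_pd hφ i)
    (hasCompactSupport_pd hc i)

lemma IsDivFree.congr_ae {v w : E3 → E3} (hv : IsDivFree v) (h : v =ᵐ[volume] w) :
    IsDivFree w := by
  intro φ hφ hc
  rw [← hv φ hφ hc]
  refine integral_congr_ae ?_
  filter_upwards [h] with x hx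
  rw [hx]

lemma IsDivFree.add {v w : E3 → E3} (hv : IsDivFree v) (hw : IsDivFree w)
    (hv_int : LocallyIntegrable v) (hw_int : LocallyIntegrable w) : IsDivFree (v + w) := by
  intro φ hφ hc
  have hint {u : E3 → E3} (hu : LocallyIntegrable u) : Integrable fun x => ∑ i, u x i * pd φ i x :=
    integrable_finsetSum _ fun i _ => integrable_mul_pd hu (hφ.of_le (by simp)) hc i
  calc ∫ x, ∑ i, (v + w) x i * pd φ i x
      = ∫ x, (∑ i, v x i * pd φ i x + ∑ i, w x i * pd φ i x) := by
        simp [add_mul, Finset.sum_add_distrib]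
    _ = 0 := by rw [integral_add (hint hv_int) (hint hw_int), hv φ hφ hc, hw φ hφ hc, add_zero]

lemma IsDivFree.const_smul {v : E3 → E3} (hv : IsDivFree v) (a : ℝ) : IsDivFree (a • v) := by
  intro φ hφ hc
  simp only [Pi.smul_apply, PiLp.smul_apply, smul_eq_mul, mul_assoc, ← Finset.mul_sum]
  rw [integral_const_mul, hv φ hφ hc, mul_zero]

lemma isDivFree_of_contDiff {f : E3 → E3} (hf : ContDiff ℝ 1 f)
    (hdiv : ∀ x, ∑ i, pd (fun y => f y i) i x = 0) : IsDivFree f := by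
  intro φ hφ hc
  have hfi (i : Fin 3) : ContDiff ℝ 1 fun y => f y i := contDiff_euclidean.1 hf i
  have hint (i : Fin 3) : Integrable (fun x => f x i * pd φ i x) :=
    integrable_mul_pd hf.continuous.locallyIntegrable (hφ.of_le (by simp)) hc i
  have hint' (i : Fin 3) : Integrable (fun x => pd (fun y => f y i) i x * φ x) :=
    ((continuous_pd (hfi i) i).mul hφ.continuous).integrable_of_hasCompactSupport hc.mul_left
  have parts (i : Fin 3) : ∫ x, f x i * pd φ i x = -∫ x, pd (fun y => f y i) i x * φ x :=
    integral_mul_fderiv_eq_neg_fderiv_mul_of_integrable (hint' i) (hint i)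
      (((hfi i).continuous.mul hφ.continuous).integrable_of_hasCompactSupport hc.mul_left)
      (fun x _ => (hfi i).differentiable one_ne_zero x)
      (fun x _ => hφ.differentiable (by simp) x)
  rw [integral_finsetSum _ fun i _ => hint i]
  simp only [parts, Finset.sum_neg_distrib]
  rw [← integral_finsetSum _ fun i _ => hint' i]
  simp [← Finset.sum_mul, hdiv]

/-- `L²_σ` as a linear subspace of `L²`, with carrier the set `L2σ`; it supplies the normed space
structure in which the Baire category argument takes place. -/
def solenoidalL2 : Submodule ℝ (Lp E3 2 (volume : Measure E3)) where
  carrier := L2σ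
  zero_mem' := by
    refine IsDivFree.congr_ae (v := 0) (fun φ _ _ => by simp) ?_
    exact (Lp.coeFn_zero E3 2 volume).symm
  add_mem' {v w} hv hw := (IsDivFree.add hv hw ((Lp.memLp v).locallyIntegrable one_le_two)
    ((Lp.memLp w).locallyIntegrable one_le_two)).congr_ae (Lp.coeFn_add v w).symm
  smul_mem' a v hv := (IsDivFree.const_smul hv a).congr_ae (Lp.coeFn_smul a v).symm

end DivergenceFree

section SolenoidalProfiles

/-- The space `C^∞_{c,σ}(ℝ³)` of smooth, compactly supported, divergence-free vector fields. -/
structure SolenoidalProfile where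
  /-- The underlying vector field. -/
  toFun : E3 → E3
  contDiff : ContDiff ℝ (⊤ : ℕ∞) toFun
  hasCompactSupport : HasCompactSupport toFun
  sum_pd_eq_zero : ∀ x, ∑ i, pd (fun y => toFun y i) i x = 0

instance : CoeFun SolenoidalProfile fun _ => E3 → E3 := ⟨SolenoidalProfile.toFun⟩

namespace SolenoidalProfile

/-- The rescaled profile `x ↦ ψ (c • x)`. -/
def dilate (ψ : SolenoidalProfile) {c : ℝ} (hc : c ≠ 0) : SolenoidalProfile where
  toFun x := ψ (c • x)
  contDiff := ψ.contDiff.comp (contDiff_const_smul c)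
  hasCompactSupport := ψ.hasCompactSupport.comp_smul hc
  sum_pd_eq_zero x := by
    have h (i : Fin 3) := pd_comp_smul (fun y => ψ y i) c i x
    simp only [h, ← Finset.mul_sum, ψ.sum_pd_eq_zero, mul_zero]

lemma memLp (ψ : SolenoidalProfile) : MemLp ψ 2 volume :=
  ψ.contDiff.continuous.memLp_of_hasCompactSupport ψ.hasCompactSupport

/-- A profile as an element of `L²_σ`. -/
def toL2 (ψ : SolenoidalProfile) : solenoidalL2 :=
  ⟨ψ.memLp.toLp ψ, (isDivFree_of_contDiff (ψ.contDiff.of_le (by simp))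
    ψ.sum_pd_eq_zero).congr_ae ψ.memLp.coeFn_toLp.symm⟩

lemma norm_toL2 (ψ : SolenoidalProfile) : ‖ψ.toL2‖ = (eLpNorm ψ 2 volume).toReal :=
  Lp.norm_toLp ψ ψ.memLp

lemma norm_toL2_dilate (ψ : SolenoidalProfile) {c : ℝ} (hc : 0 < c) :
    ‖(ψ.dilate hc.ne').toL2‖ = c ^ (-(3 / 2) : ℝ) * ‖ψ.toL2‖ := by
  have h := eLpNorm_comp_smul (μ := (volume : Measure E3)) (p := 2) (by simp) hc ψ
  simp only [finrank_euclideanSpace, Fintype.card_fin, Nat.cast_ofNat, toReal_ofNat] at h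
  rw [norm_toL2, norm_toL2, dilate, h, toReal_mul, toReal_ofReal (by positivity)]

lemma inner_toL2 (ψ : SolenoidalProfile) (v : solenoidalL2) :
    inner ℝ ψ.toL2 v = ∫ x, ∑ i, (v : Lp E3 2 (volume : Measure E3)) x i * ψ x i := by
  rw [Submodule.coe_inner, L2.inner_def]
  refine integral_congr_ae ?_
  filter_upwards [ψ.memLp.coeFn_toLp] with x hx
  simp [toL2, hx, PiLp.inner_apply]

lemma toL2_ne_zero {ψ : SolenoidalProfile} {x : E3} (hx : ψ x ≠ 0) : ψ.toL2 ≠ 0 := by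
  intro h
  have hae : ψ =ᵐ[volume] (0 : E3 → E3) :=
    (MemLp.toLp_eq_toLp_iff ψ.memLp .zero).1 (congrArg Subtype.val h)
  exact hx (congrFun ((ψ.contDiff.continuous.ae_eq_iff_eq volume continuous_zero).1 hae) x)

/-- The planar curl `(∂₁g, -∂₀g, 0)` of a scalar bump `g`. -/
def curl {g : E3 → ℝ} (hg : ContDiff ℝ (⊤ : ℕ∞) g) (hc : HasCompactSupport g) :
    SolenoidalProfile where
  toFun x := !₂[pd g 1 x, -pd g 0 x, 0]
  contDiff := by
    have hpd (j : Fin 3) : ContDiff ℝ (⊤ : ℕ∞) (pd g j) := contDiff_pd hg (by simp) j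
    refine contDiff_euclidean.2 fun i => ?_
    fin_cases i
    exacts [hpd 1, (hpd 0).neg, contDiff_const]
  hasCompactSupport := hc.mono' <| Function.support_subset_iff'.2 fun x hx => by
    have hpd (j : Fin 3) : pd g j x = 0 :=
      image_eq_zero_of_notMem_tsupport fun h => hx (tsupport_pd_subset g j h)
    ext i
    fin_cases i <;> simp [hpd]
  sum_pd_eq_zero x := by
    have hzero : pd (fun _ => 0) 2 x = 0 := by simp [pd]
    have hg2 : ContDiff ℝ 2 g := hg.of_le (WithTop.coe_le_coe.2 le_top)
    have hcomm : pd (pd g 1) 0 x = pd (pd g 0) 1 x := pd_comm hg2 1 0 x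
    simpa [Fin.sum_univ_three, pd_neg, hzero] using add_neg_eq_zero.2 hcomm

lemma exists_ne_zero : ∃ (ψ : SolenoidalProfile) (x : E3), ψ x ≠ 0 := by
  let g : ContDiffBump (0 : E3) := ⟨1, 2, one_pos, one_lt_two⟩
  by_contra! h
  have hpd (x : E3) : pd g 1 x = 0 := congrArg (· 0) (h (curl g.contDiff g.hasCompactSupport) x)
  have hg := eq_zero_of_pd_eq_zero (g.contDiff.differentiable (n := 1) one_ne_zero)
    g.hasCompactSupport hpd 0
  exact one_ne_zero ((g.one_of_mem_closedBall (by simp [g])).symm.trans hg)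

end SolenoidalProfile

end SolenoidalProfiles

section RescaledTests

/-- A smooth cutoff in time, equal to `1` near `0` and supported in `(-1, 1)`. -/
def timeCutoff : ContDiffBump (0 : ℝ) := ⟨1 / 4, 1 / 2, by norm_num, by norm_num⟩

lemma timeCutoff_zero : timeCutoff 0 = 1 :=
  timeCutoff.one_of_mem_closedBall (by simp [timeCutoff])

lemma tsupport_timeCutoff_subset : tsupport timeCutoff ⊆ Metric.ball 0 1 := by
  rw [timeCutoff.tsupport_eq]
  exact Metric.closedBall_subset_ball (by norm_num [timeCutoff])

/-- The space-time cylinder `(0, d⁻¹) × B(0, R / c)`: the part in positive time of the preimage of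
`(-1, 1) × B(0, R)` under the scaling `(t, x) ↦ (d t, c x)`. -/
def scaledCylinder (R c d : ℝ) : Set (ℝ × E3) := Ioo 0 d⁻¹ ×ˢ Metric.ball 0 (R / c)

lemma mem_scaledCylinder {R c d : ℝ} (hc : 0 < c) (hd : 0 < d) {p : ℝ × E3} (hp : 0 < p.1)
    (ht : d * p.1 ∈ Metric.ball (0 : ℝ) 1) (hx : c • p.2 ∈ Metric.ball (0 : E3) R) :
    p ∈ scaledCylinder R c d := by
  rw [mem_ball_zero_iff, Real.norm_of_nonneg (by positivity)] at ht
  rw [mem_ball_zero_iff, norm_smul, Real.norm_of_nonneg hc.le] at hx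
  refine ⟨⟨hp, ?_⟩, mem_ball_zero_iff.2 ((lt_div_iff₀' hc).2 hx)⟩
  rwa [← one_div, lt_div_iff₀' hd]

lemma exists_abs_mul_le_indicator_scaledCylinder {ι : Type*} [Finite ι] {a : ℝ → ℝ} {b : ι → E3 → ℝ}
    {R : ℝ} (ha : Continuous a) (has : tsupport a ⊆ Metric.ball 0 1)
    (hb : ∀ i, Continuous (b i)) (hbs : ∀ i, tsupport (b i) ⊆ Metric.ball 0 R) :
    ∃ C, 0 ≤ C ∧ ∀ c d : ℝ, 0 < c → 0 < d → ∀ p : ℝ × E3, 0 < p.1 → ∀ i,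
      |a (d * p.1) * b i (c • p.2)| ≤ C * (scaledCylinder R c d).indicator 1 p := by
  have hac : HasCompactSupport a :=
    Metric.isCompact_of_isClosed_isBounded (isClosed_tsupport a) (Metric.isBounded_ball.subset has)
  have hbc (i : ι) : HasCompactSupport (b i) :=
    Metric.isCompact_of_isClosed_isBounded (isClosed_tsupport (b i))
      (Metric.isBounded_ball.subset (hbs i))
  obtain ⟨A, hA⟩ := hac.exists_bound_of_continuous ha
  choose B hB using fun i => (hbc i).exists_bound_of_continuous (hb i)
  obtain ⟨B', hB'⟩ := (Set.finite_range B).bddAbove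
  have hA0 : 0 ≤ A := (norm_nonneg _).trans (hA 0)
  refine ⟨A * max B' 0, by positivity, fun c d hc hd p hp i => ?_⟩
  by_cases hpc : p ∈ scaledCylinder R c d
  · rw [indicator_of_mem hpc, Pi.one_apply, mul_one, abs_mul]
    have hBi : ‖b i (c • p.2)‖ ≤ max B' 0 :=
      (hB i _).trans ((hB' (mem_range_self i)).trans (le_max_left _ _))
    exact mul_le_mul (hA _) hBi (abs_nonneg _) hA0
  · have hzero : a (d * p.1) * b i (c • p.2) = 0 := by
      by_contra h
      rw [mul_eq_zero, not_or] at h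
      exact hpc (mem_scaledCylinder hc hd hp (has (subset_tsupport a h.1))
        (hbs i (subset_tsupport (b i) h.2)))
    simp [hpc, hzero]

namespace SolenoidalProfile

variable (ψ : SolenoidalProfile)

lemma contDiff_apply (i : Fin 3) : ContDiff ℝ (⊤ : ℕ∞) fun x => ψ x i :=
  contDiff_euclidean.1 ψ.contDiff i

/-- The test function `(t, x) ↦ χ (d t) ψ (c x)`, where `χ` is the time cutoff. -/
def test (c d : ℝ) (p : ℝ × E3) : E3 := timeCutoff (d * p.1) • ψ (c • p.2)

lemma test_zero (c d : ℝ) (x : E3) : ψ.test c d (0, x) = ψ (c • x) := by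
  simp [test, timeCutoff_zero]

lemma timeDeriv_test (c d : ℝ) (p : ℝ × E3) (i : Fin 3) :
    timeDeriv (ψ.test c d) p i = d * (deriv timeCutoff (d * p.1) * ψ (c • p.2) i) := by
  simp only [timeDeriv, test, PiLp.smul_apply, smul_eq_mul]
  rw [deriv_mul_const_field, deriv_comp_mul_left, smul_eq_mul, mul_assoc]

lemma spaceGrad_test (c d : ℝ) (p : ℝ × E3) (i j : Fin 3) :
    spaceGrad (ψ.test c d) p i j =
      c * (timeCutoff (d * p.1) * pd (fun y => ψ y i) j (c • p.2)) := by
  simp only [spaceGrad, test, PiLp.smul_apply, smul_eq_mul]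
  rw [pd_const_mul (fun y => ψ (c • y) i), pd_comp_smul (fun y => ψ y i), mul_left_comm]

lemma spaceLap_test (c d : ℝ) (p : ℝ × E3) (i : Fin 3) :
    spaceLap (ψ.test c d) p i =
      c ^ 2 * ∑ j, timeCutoff (d * p.1) * pd (pd (fun y => ψ y i) j) j (c • p.2) := by
  simp only [spaceLap, Finset.mul_sum]
  refine Finset.sum_congr rfl fun j _ => ?_
  have hgrad : (fun y => pd (fun z => ψ.test c d (p.1, z) i) j y) =
      fun y => c * (timeCutoff (d * p.1) * pd (fun y => ψ y i) j (c • y)) :=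
    funext fun y => ψ.spaceGrad_test c d (p.1, y) i j
  rw [hgrad, pd_const_mul fun y => timeCutoff (d * p.1) * pd (fun y => ψ y i) j (c • y),
    pd_const_mul fun y => pd (fun y => ψ y i) j (c • y), pd_comp_smul (pd (fun y => ψ y i) j)]
  ring

lemma isTest_test {c d : ℝ} (hc : c ≠ 0) (hd : d ≠ 0) : IsTest (ψ.test c d) := by
  refine ⟨?_, ?_, fun p => ?_⟩
  · exact (timeCutoff.contDiff.comp (contDiff_const.mul contDiff_fst)).smul
      (ψ.contDiff.comp (contDiff_snd.const_smul c))
  · have hχ := (timeCutoff.hasCompactSupport.comp_smul hd).isCompact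
    have hψ := (ψ.hasCompactSupport.comp_smul hc).isCompact
    refine .of_support_subset_isCompact (hχ.prod hψ) fun p hp => ⟨subset_tsupport _ ?_,
      subset_tsupport _ ?_⟩
    exacts [left_ne_zero_of_smul hp, right_ne_zero_of_smul hp]
  · have hgrad (i : Fin 3) := ψ.spaceGrad_test c d p i i
    simp only [spaceGrad] at hgrad
    simp only [hgrad, ← Finset.mul_sum, ψ.sum_pd_eq_zero, mul_zero]

lemma tsupport_pd_apply_subset (i j : Fin 3) : tsupport (pd (fun x => ψ x i) j) ⊆ tsupport ψ :=
  (tsupport_pd_subset _ j).trans (tsupport_comp_subset (g := fun v : E3 => v i) rfl ψ)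

lemma exists_abs_spaceGrad_test_le {R : ℝ} (hR : tsupport ψ ⊆ Metric.ball 0 R) :
    ∃ C, 0 ≤ C ∧ ∀ c d : ℝ, 0 < c → 0 < d → ∀ p : ℝ × E3, 0 < p.1 → ∀ i j,
      |spaceGrad (ψ.test c d) p i j| ≤ C * c * (scaledCylinder R c d).indicator 1 p := by
  obtain ⟨C, hC, h⟩ := exists_abs_mul_le_indicator_scaledCylinder
    (b := fun ij : Fin 3 × Fin 3 => pd (fun x => ψ x ij.1) ij.2)
    timeCutoff.continuous tsupport_timeCutoff_subset
    (fun ij => continuous_pd ((ψ.contDiff_apply ij.1).of_le (by simp)) ij.2)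
    fun ij => (ψ.tsupport_pd_apply_subset ij.1 ij.2).trans hR
  refine ⟨C, hC, fun c d hc hd p hp i j => ?_⟩
  rw [spaceGrad_test, abs_mul, abs_of_pos hc, mul_comm C c, mul_assoc]
  gcongr
  exact h c d hc hd p hp (i, j)

lemma exists_abs_timeDeriv_test_le {R : ℝ} (hR : tsupport ψ ⊆ Metric.ball 0 R) :
    ∃ C, 0 ≤ C ∧ ∀ c d : ℝ, 0 < c → 0 < d → ∀ p : ℝ × E3, 0 < p.1 → ∀ i,
      |timeDeriv (ψ.test c d) p i| ≤ C * d * (scaledCylinder R c d).indicator 1 p := by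
  obtain ⟨C, hC, h⟩ := exists_abs_mul_le_indicator_scaledCylinder
    (timeCutoff.contDiff.continuous_deriv le_rfl)
    (tsupport_deriv_subset.trans tsupport_timeCutoff_subset)
    (fun i => (ψ.contDiff_apply i).continuous)
    fun i => (tsupport_comp_subset (g := fun v : E3 => v i) rfl ψ).trans hR
  refine ⟨C, hC, fun c d hc hd p hp i => ?_⟩
  rw [timeDeriv_test, abs_mul, abs_of_pos hd, mul_comm C d, mul_assoc]
  gcongr
  exact h c d hc hd p hp i

lemma exists_abs_spaceLap_test_le {R : ℝ} (hR : tsupport ψ ⊆ Metric.ball 0 R) :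
    ∃ C, 0 ≤ C ∧ ∀ c d : ℝ, 0 < c → 0 < d → ∀ p : ℝ × E3, 0 < p.1 → ∀ i,
      |spaceLap (ψ.test c d) p i| ≤ C * c ^ 2 * (scaledCylinder R c d).indicator 1 p := by
  obtain ⟨C, hC, h⟩ := exists_abs_mul_le_indicator_scaledCylinder
    (b := fun ij : Fin 3 × Fin 3 => pd (pd (fun x => ψ x ij.1) ij.2) ij.2)
    timeCutoff.continuous tsupport_timeCutoff_subset
    (fun ij => continuous_pd
      (contDiff_pd (ψ.contDiff_apply ij.1) (WithTop.coe_le_coe.2 le_top) ij.2) ij.2)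
    fun ij => (tsupport_pd_subset _ ij.2).trans ((ψ.tsupport_pd_apply_subset ij.1 ij.2).trans hR)
  refine ⟨3 * C, by positivity, fun c d hc hd p hp i => ?_⟩
  calc |spaceLap (ψ.test c d) p i|
      = c ^ 2 * |∑ j, timeCutoff (d * p.1) * pd (pd (fun y => ψ y i) j) j (c • p.2)| := by
        rw [spaceLap_test, abs_mul, abs_of_nonneg (sq_nonneg c)]
    _ ≤ c ^ 2 * ∑ _j : Fin 3, C * (scaledCylinder R c d).indicator 1 p := by
        gcongr
        exact (Finset.abs_sum_le_sum_abs _ _).trans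
          (Finset.sum_le_sum fun j _ => h c d hc hd p hp (i, j))
    _ = 3 * C * c ^ 2 * (scaledCylinder R c d).indicator 1 p := by simp; ring

/-- The hypothesis `c ^ 2 ≤ d` makes the viscous term subordinate to the time derivative. -/
lemma exists_abs_timeDeriv_add_spaceLap_test_le (ν : ℝ) {R : ℝ}
    (hR : tsupport ψ ⊆ Metric.ball 0 R) :
    ∃ C, 0 ≤ C ∧ ∀ c d : ℝ, 0 < c → c ^ 2 ≤ d → ∀ p : ℝ × E3, 0 < p.1 → ∀ i,
      |timeDeriv (ψ.test c d) p i + ν * spaceLap (ψ.test c d) p i| ≤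
        C * d * (scaledCylinder R c d).indicator 1 p := by
  obtain ⟨C, hC, htime⟩ := ψ.exists_abs_timeDeriv_test_le hR
  obtain ⟨C', hC', hlap⟩ := ψ.exists_abs_spaceLap_test_le hR
  refine ⟨C + |ν| * C', by positivity, fun c d hc hcd p hp i => ?_⟩
  have hd : 0 < d := (by positivity : 0 < c ^ 2).trans_le hcd
  have hind : (0 : ℝ) ≤ (scaledCylinder R c d).indicator 1 p := indicator_nonneg (by simp) p
  calc |timeDeriv (ψ.test c d) p i + ν * spaceLap (ψ.test c d) p i|
      ≤ |timeDeriv (ψ.test c d) p i| + |ν| * |spaceLap (ψ.test c d) p i| := by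
        rw [← abs_mul]
        exact abs_add_le _ _
    _ ≤ C * d * (scaledCylinder R c d).indicator 1 p +
          |ν| * (C' * d * (scaledCylinder R c d).indicator 1 p) := by
        gcongr
        · exact htime c d hc hd p hp i
        · exact (hlap c d hc hd p hp i).trans (by gcongr)
    _ = (C + |ν| * C') * d * (scaledCylinder R c d).indicator 1 p := by ring

end SolenoidalProfile

end RescaledTests

section VeryWeakSolutions

/-- Very weak solutions of the Navier–Stokes equations: only the energy class and the weak
formulation of `IsWeakNS` are kept, so neither a gradient nor incompressibility is required,
and the viscosity is an arbitrary real number. -/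
structure IsVeryWeakNS (ν : ℝ) (u₀ : E3 → E3) (u : ℝ → E3 → E3) : Prop where
  aestronglyMeasurable : AEStronglyMeasurable (Function.uncurry u) μST
  mixedNorm_lt_top : mixedNorm ∞ 2 (Ioi 0) u < ∞
  integral_eq : ∀ φ : ℝ × E3 → E3, IsTest φ →
    (∫ p,
        ((∑ i, u p.1 p.2 i * (timeDeriv φ p i + ν * spaceLap φ p i)) +
         ∑ i, ∑ j, u p.1 p.2 i * u p.1 p.2 j * spaceGrad φ p i j) ∂μST)
      = - ∫ x : E3, ∑ i, u₀ x i * φ (0, x) i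

lemma IsWeakNS.isVeryWeakNS {ν : ℝ} {u₀ : E3 → E3} {u : ℝ → E3 → E3}
    {G : ℝ → E3 → Fin 3 → Fin 3 → ℝ} (hu : IsWeakNS ν u₀ u G) : IsVeryWeakNS ν u₀ u := by
  obtain ⟨hmeas, henergy, -, -, -, -, hweak⟩ := hu
  exact ⟨hmeas, henergy, hweak⟩

lemma abs_sum_mul_add_sum_sum_mul_le {ι : Type*} [Fintype ι] (v : EuclideanSpace ℝ ι)
    {a : ι → ℝ} {b : ι → ι → ℝ} {A B : ℝ} (ha : ∀ i, |a i| ≤ A) (hb : ∀ i j, |b i j| ≤ B) :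
    |(∑ i, v i * a i) + ∑ i, ∑ j, v i * v j * b i j| ≤
      Fintype.card ι * (A * ‖v‖) + Fintype.card ι ^ 2 * (B * ‖v‖ ^ 2) := by
  have hv (i : ι) : |v i| ≤ ‖v‖ := PiLp.norm_apply_le v i
  have hlin (i : ι) : |v i * a i| ≤ A * ‖v‖ := by
    rw [abs_mul, mul_comm]
    gcongr
    exacts [(abs_nonneg _).trans (ha i), ha i, hv i]
  have hquad (i j : ι) : |v i * v j * b i j| ≤ B * ‖v‖ ^ 2 := by
    rw [abs_mul, abs_mul, mul_comm, sq]
    gcongr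
    exacts [(abs_nonneg _).trans (hb i j), hb i j, hv i, hv j]
  calc |(∑ i, v i * a i) + ∑ i, ∑ j, v i * v j * b i j|
      ≤ ∑ i, |v i * a i| + ∑ i, ∑ j, |v i * v j * b i j| := by
        refine (abs_add_le _ _).trans (add_le_add (Finset.abs_sum_le_sum_abs _ _) ?_)
        refine (Finset.abs_sum_le_sum_abs _ _).trans ?_
        gcongr
        exact Finset.abs_sum_le_sum_abs _ _
    _ ≤ (∑ _i : ι, A * ‖v‖) + ∑ _i : ι, ∑ _j : ι, B * ‖v‖ ^ 2 := by
        gcongr with i _ i _ j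
        exacts [hlin i, hquad i j]
    _ = Fintype.card ι * (A * ‖v‖) + Fintype.card ι ^ 2 * (B * ‖v‖ ^ 2) := by
        simp [sq, mul_assoc]

lemma IsVeryWeakNS.enorm_integral_le {ν : ℝ} {u₀ : E3 → E3} {u : ℝ → E3 → E3}
    (hu : IsVeryWeakNS ν u₀ u) {φ : ℝ × E3 → E3} (hφ : IsTest φ) {S : Set (ℝ × E3)}
    (hS : MeasurableSet S) {A B : ℝ} (hA : 0 ≤ A) (hB : 0 ≤ B)
    (hφA : ∀ p : ℝ × E3, 0 < p.1 → ∀ i,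
      |timeDeriv φ p i + ν * spaceLap φ p i| ≤ A * S.indicator 1 p)
    (hφB : ∀ p : ℝ × E3, 0 < p.1 → ∀ i j, |spaceGrad φ p i j| ≤ B * S.indicator 1 p) :
    ‖∫ x, ∑ i, u₀ x i * φ (0, x) i‖ₑ ≤
      ENNReal.ofReal (3 * A) * ∫⁻ p in S, ‖u p.1 p.2‖ₑ ∂μST +
        ENNReal.ofReal (9 * B) * ∫⁻ p in S, ‖u p.1 p.2‖ₑ ^ 2 ∂μST := by
  have hpos : ∀ᵐ p ∂μST, 0 < p.1 :=
    Measure.quasiMeasurePreserving_fst.ae (ae_restrict_mem measurableSet_Ioi)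
  have hm : AEMeasurable (fun p : ℝ × E3 => ‖u p.1 p.2‖ₑ) (μST.restrict S) :=
    hu.aestronglyMeasurable.enorm.restrict
  rw [← enorm_neg, ← hu.integral_eq φ hφ, ← lintegral_const_mul'' _ hm,
    ← lintegral_const_mul'' _ (hm.pow_const 2), ← lintegral_add_left' (hm.const_mul _),
    ← lintegral_indicator hS]
  refine (enorm_integral_le_lintegral_enorm _).trans (lintegral_mono_ae ?_)
  filter_upwards [hpos] with p hp
  have hle := abs_sum_mul_add_sum_sum_mul_le (u p.1 p.2) (hφA p hp) (hφB p hp)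
  rw [Real.enorm_eq_ofReal_abs]
  by_cases hpS : p ∈ S
  · simp only [indicator_of_mem hpS, Pi.one_apply, mul_one, Fintype.card_fin, Nat.cast_ofNat,
      ← mul_assoc] at hle ⊢
    rw [← ofReal_norm, ← ENNReal.ofReal_pow (norm_nonneg _), ← ENNReal.ofReal_mul (by positivity),
      ← ENNReal.ofReal_mul (by positivity), ← ENNReal.ofReal_add (by positivity) (by positivity)]
    refine ENNReal.ofReal_le_ofReal (hle.trans_eq ?_)
    norm_num
  · simp only [indicator_of_notMem hpS, mul_zero, zero_mul, add_zero] at hle ⊢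
    exact (ENNReal.ofReal_eq_zero.2 hle).le

end VeryWeakSolutions

section CylinderEstimates

lemma mixedNorm_eq_eLpNorm {r s : ℝ≥0∞} (hr : r ≠ 0) (I : Set ℝ) (u : ℝ → E3 → E3) :
    mixedNorm r s I u = eLpNorm (fun t => eLpNorm (u t) s volume) r (volume.restrict I) := by
  by_cases h : r = ∞
  · simp [mixedNorm, h, eLpNorm, eLpNormEssSup]
  · simp [mixedNorm, h, hr, eLpNorm, eLpNorm']

lemma mixedNorm_mono_set {r s : ℝ≥0∞} (hr : r ≠ 0) {I J : Set ℝ} (hIJ : I ⊆ J)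
    (u : ℝ → E3 → E3) : mixedNorm r s I u ≤ mixedNorm r s J u := by
  rw [mixedNorm_eq_eLpNorm hr, mixedNorm_eq_eLpNorm hr]
  exact eLpNorm_mono_measure _ (Measure.restrict_mono hIJ le_rfl)

lemma measurableSet_scaledCylinder (R c d : ℝ) : MeasurableSet (scaledCylinder R c d) :=
  measurableSet_Ioo.prod measurableSet_ball

lemma volume_ball_div (R : ℝ) {c : ℝ} (hc : 0 < c) :
    volume (Metric.ball (0 : E3) (R / c)) =
      ENNReal.ofReal (c ^ (-3 : ℝ)) * volume (Metric.ball (0 : E3) R) := by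
  rw [div_eq_inv_mul, Measure.addHaar_ball_mul _ _ (inv_nonneg.2 hc.le), finrank_euclideanSpace,
    Fintype.card_fin, inv_pow, Real.rpow_neg hc.le, Real.rpow_ofNat]

lemma volume_restrict_Ioi_restrict_Ioo (τ : ℝ) :
    (volume.restrict (Ioi 0)).restrict (Ioo 0 τ) = volume.restrict (Ioo 0 τ) := by
  rw [Measure.restrict_restrict measurableSet_Ioo, inter_eq_left.2 Ioo_subset_Ioi_self]

lemma volume_restrict_Ioi_apply_Ioo (τ : ℝ) :
    volume.restrict (Ioi 0) (Ioo 0 τ) = ENNReal.ofReal τ := by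
  rw [Measure.restrict_eq_self _ Ioo_subset_Ioi_self, Real.volume_Ioo, sub_zero]

variable {u : ℝ → E3 → E3}

lemma exists_lintegral_scaledCylinder_enorm_le {r s : ℝ≥0∞} (hr : 1 ≤ r) (hs : 1 ≤ s)
    (hu : AEStronglyMeasurable (Function.uncurry u) μST) {T : ℝ}
    (hT : mixedNorm r s (Ioo 0 T) u ≠ ∞) (R : ℝ) :
    ∃ K : ℝ, 0 ≤ K ∧ ∀ c d : ℝ, 0 < c → 0 < d → d⁻¹ ≤ T →
      ∫⁻ p in scaledCylinder R c d, ‖u p.1 p.2‖ₑ ∂μST ≤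
        ENNReal.ofReal (K * c ^ (-3 * (1 - 1 / s.toReal)) * d ^ (-(1 - 1 / r.toReal))) := by
  set q := 1 - 1 / s.toReal
  have hq : 0 ≤ q := sub_nonneg.2 (one_div_toReal_le_one hs)
  have hr0 : r ≠ 0 := (zero_lt_one.trans_le hr).ne'
  have hV : volume (Metric.ball (0 : E3) R) ^ q ≠ ∞ :=
    ENNReal.rpow_ne_top_of_nonneg hq measure_ball_lt_top.ne
  refine ⟨(mixedNorm r s (Ioo 0 T) u * volume (Metric.ball (0 : E3) R) ^ q).toReal,
    toReal_nonneg, fun c d hc hd hdT => ?_⟩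
  calc ∫⁻ p in scaledCylinder R c d, ‖u p.1 p.2‖ₑ ∂μST
      ≤ mixedNorm r s (Ioo 0 d⁻¹) u * volume (Metric.ball (0 : E3) (R / c)) ^ q *
          ENNReal.ofReal d⁻¹ ^ (1 - 1 / r.toReal) := by
        rw [mixedNorm_eq_eLpNorm hr0, ← volume_restrict_Ioi_restrict_Ioo,
          ← volume_restrict_Ioi_apply_Ioo d⁻¹]
        exact setLIntegral_prod_enorm_le hr hs measure_ball_lt_top.ne hu.restrict
    _ ≤ mixedNorm r s (Ioo 0 T) u * volume (Metric.ball (0 : E3) (R / c)) ^ q *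
          ENNReal.ofReal d⁻¹ ^ (1 - 1 / r.toReal) := by
        gcongr
        exact mixedNorm_mono_set hr0 (Ioo_subset_Ioo_right hdT) u
    _ = _ := by
        rw [volume_ball_div R hc, ENNReal.mul_rpow_of_nonneg _ _ hq,
          ENNReal.ofReal_rpow_of_pos (by positivity), ENNReal.ofReal_rpow_of_pos (by positivity),
          ← Real.rpow_mul hc.le, Real.inv_rpow hd.le, ← Real.rpow_neg hd.le,
          ENNReal.ofReal_mul (by positivity), ENNReal.ofReal_mul toReal_nonneg,
          ENNReal.ofReal_toReal (ENNReal.mul_ne_top hT hV), mul_left_comm (mixedNorm _ _ _ _),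
          mul_comm (ENNReal.ofReal (c ^ _))]

lemma exists_lintegral_scaledCylinder_enorm_sq_le
    (hu : AEStronglyMeasurable (Function.uncurry u) μST) (hfin : mixedNorm ∞ 2 (Ioi 0) u ≠ ∞) :
    ∃ K : ℝ, 0 ≤ K ∧ ∀ R c d : ℝ,
      ∫⁻ p in scaledCylinder R c d, ‖u p.1 p.2‖ₑ ^ 2 ∂μST ≤ ENNReal.ofReal (K * d⁻¹) := by
  refine ⟨(mixedNorm ∞ 2 (Ioi 0) u ^ 2).toReal, toReal_nonneg, fun R c d => ?_⟩
  calc ∫⁻ p in scaledCylinder R c d, ‖u p.1 p.2‖ₑ ^ 2 ∂μST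
      ≤ mixedNorm ∞ 2 (Ioo 0 d⁻¹) u ^ 2 * ENNReal.ofReal d⁻¹ := by
        rw [← volume_restrict_Ioi_apply_Ioo d⁻¹, mixedNorm, if_pos rfl,
          ← volume_restrict_Ioi_restrict_Ioo]
        have h := setLIntegral_prod_enorm_rpow_le (p := 2) two_ne_zero
          (hu.restrict (s := scaledCylinder R c d))
        simp only [NNReal.coe_ofNat, ENNReal.coe_ofNat, ENNReal.rpow_ofNat] at h
        exact h
    _ ≤ mixedNorm ∞ 2 (Ioi 0) u ^ 2 * ENNReal.ofReal d⁻¹ := by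
        gcongr
        exact mixedNorm_mono_set top_ne_zero Ioo_subset_Ioi_self u
    _ = ENNReal.ofReal ((mixedNorm ∞ 2 (Ioi 0) u ^ 2).toReal * d⁻¹) := by
        rw [ENNReal.ofReal_mul toReal_nonneg, ENNReal.ofReal_toReal (ENNReal.pow_ne_top hfin)]

lemma IsVeryWeakNS.exists_abs_integral_le {ν : ℝ} {u₀ : E3 → E3} (hu : IsVeryWeakNS ν u₀ u)
    {r s : ℝ≥0∞} (hr : 1 ≤ r) (hs : 1 ≤ s) {T : ℝ} (hT : mixedNorm r s (Ioo 0 T) u ≠ ∞)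
    (ψ : SolenoidalProfile) :
    ∃ K : ℝ, 0 ≤ K ∧ ∀ c d : ℝ, 0 < c → c ^ 2 ≤ d → d⁻¹ ≤ T →
      |∫ x, ∑ i, u₀ x i * ψ (c • x) i| ≤
        K * (c ^ (-3 * (1 - 1 / s.toReal)) * d ^ (1 / r.toReal) + c * d⁻¹) := by
  obtain ⟨R, hR⟩ := ψ.hasCompactSupport.isCompact.isBounded.subset_ball 0
  obtain ⟨A, hA, htime⟩ := ψ.exists_abs_timeDeriv_add_spaceLap_test_le ν hR
  obtain ⟨B, hB, hgrad⟩ := ψ.exists_abs_spaceGrad_test_le hR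
  obtain ⟨K₁, hK₁, hlin⟩ :=
    exists_lintegral_scaledCylinder_enorm_le hr hs hu.aestronglyMeasurable hT R
  obtain ⟨K₂, hK₂, hquad⟩ := exists_lintegral_scaledCylinder_enorm_sq_le hu.aestronglyMeasurable
    hu.mixedNorm_lt_top.ne
  refine ⟨3 * A * K₁ + 9 * B * K₂, by positivity, fun c d hc hcd hdT => ?_⟩
  have hd : 0 < d := (by positivity : 0 < c ^ 2).trans_le hcd
  set X := c ^ (-3 * (1 - 1 / s.toReal))
  have : 0 ≤ X := by positivity
  have hpair := hu.enorm_integral_le (ψ.isTest_test hc.ne' hd.ne')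
    (measurableSet_scaledCylinder R c d) (by positivity) (by positivity) (htime c d hc hcd)
    (hgrad c d hc hd)
  simp only [ψ.test_zero, Real.enorm_eq_ofReal_abs] at hpair
  have hreal : |∫ x, ∑ i, u₀ x i * ψ (c • x) i| ≤
      3 * (A * d) * (K₁ * X * d ^ (-(1 - 1 / r.toReal))) + 9 * (B * c) * (K₂ * d⁻¹) := by
    rw [← ENNReal.ofReal_le_ofReal_iff (by positivity), ENNReal.ofReal_add (by positivity)
      (by positivity), ENNReal.ofReal_mul (p := 3 * (A * d)) (by positivity),
      ENNReal.ofReal_mul (p := 9 * (B * c)) (by positivity)]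
    refine hpair.trans ?_
    gcongr
    exacts [hlin c d hc hd hdT, hquad R c d]
  have hpow : d * d ^ (-(1 - 1 / r.toReal)) = d ^ (1 / r.toReal) := by
    rw [neg_sub, Real.rpow_sub_one hd.ne', mul_div_cancel₀ _ hd.ne']
  calc |∫ x, ∑ i, u₀ x i * ψ (c • x) i|
      ≤ 3 * A * K₁ * (X * d ^ (1 / r.toReal)) + 9 * B * K₂ * (c * d⁻¹) := by
        rw [← hpow]
        linarith
    _ ≤ (3 * A * K₁ + 9 * B * K₂) * (X * d ^ (1 / r.toReal) + c * d⁻¹) := by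
        have : 0 ≤ A * K₁ * (c * d⁻¹) := by positivity
        have : 0 ≤ B * K₂ * (X * d ^ (1 / r.toReal)) := by positivity
        linarith

end CylinderEstimates

section GenericData

open Asymptotics

lemma exists_decay_exponent {r s : ℝ≥0∞} (h : 5 / (3 * r) + 2 / s < 1) :
    ∃ κ : ℝ, 3 / 2 < κ ∧ (κ + 1) * (1 / r.toReal) - 3 * (1 - 1 / s.toReal) ≤ -κ := by
  have hr : 5 / (3 * r) ≠ ∞ := ((le_self_add.trans_lt h).trans_le le_top).ne
  have hs : 2 / s ≠ ∞ := ((le_add_self.trans_lt h).trans_le le_top).ne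
  have hreal := (ENNReal.toReal_lt_toReal (ENNReal.add_ne_top.2 ⟨hr, hs⟩) (by simp)).2 h
  rw [ENNReal.toReal_add hr hs] at hreal
  simp only [ENNReal.toReal_div, ENNReal.toReal_mul, ENNReal.toReal_ofNat, ENNReal.toReal_one]
    at hreal
  set x := 1 / r.toReal with hx
  set y := 1 / s.toReal with hy
  have hx0 : 0 ≤ x := by positivity
  have hxy : 5 / 3 * x + 2 * y < 1 := by
    convert hreal using 2
    · rw [hx, div_mul_div_comm, mul_one]
    · rw [hy, mul_one_div]
  have hκ : (3 - 3 * y - x) / (1 + x) * (1 + x) = 3 - 3 * y - x := by field_simp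
  refine ⟨(3 - 3 * y - x) / (1 + x), ?_, by linarith⟩
  rw [lt_div_iff₀ (by positivity)]
  linarith

lemma ennreal_le_of_div_lt_one {a b : ℝ≥0∞} (h : a / b < 1) : a ≤ b := by
  by_contra! hba
  rcases eq_or_ne b 0 with rfl | hb
  · simp [ENNReal.div_zero hba.ne'] at h
  · exact h.not_ge ((ENNReal.le_div_iff_mul_le (.inl hb) (.inl (hba.trans_le le_top).ne)).2
      (by simpa using hba.le))

lemma one_le_exponents {r s : ℝ≥0∞} (h : 5 / (3 * r) + 2 / s < 1) : 1 ≤ r ∧ 1 ≤ s := by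
  have hr : 5 ≤ 3 * r := ennreal_le_of_div_lt_one (le_self_add.trans_lt h)
  have hs : 2 ≤ s := ennreal_le_of_div_lt_one (le_add_self.trans_lt h)
  refine ⟨?_, one_le_two.trans hs⟩
  rw [← ENNReal.mul_le_mul_iff_right three_ne_zero ofNat_ne_top, mul_one]
  exact le_trans (by norm_num) hr

lemma IsVeryWeakNS.integral_isBigO_rpow {ν : ℝ} {u₀ : E3 → E3} {u : ℝ → E3 → E3}
    (hu : IsVeryWeakNS ν u₀ u) {r s : ℝ≥0∞} (hr : 1 ≤ r) (hs : 1 ≤ s) {T : ℝ} (hT : 0 < T)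
    (hfin : mixedNorm r s (Ioo 0 T) u ≠ ∞) (ψ : SolenoidalProfile) {κ : ℝ} (hκ : 1 ≤ κ)
    (hκrs : (κ + 1) * (1 / r.toReal) - 3 * (1 - 1 / s.toReal) ≤ -κ) :
    (fun c : ℝ => ∫ x, ∑ i, u₀ x i * ψ (c • x) i) =O[atTop] fun c => c ^ (-κ) := by
  obtain ⟨K, hK, hbound⟩ := hu.exists_abs_integral_le hr hs hfin ψ
  have hlarge : ∀ᶠ c : ℝ in atTop, T⁻¹ ≤ c ^ (κ + 1) :=
    (tendsto_rpow_atTop (by linarith)).eventually_ge_atTop _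
  refine .of_bound (K * 2) ?_
  filter_upwards [eventually_ge_atTop 1, hlarge] with c hc hcT
  have hc0 : 0 < c := by positivity
  have hsq : c ^ 2 ≤ c ^ (κ + 1) := by
    rw [← Real.rpow_natCast]
    exact Real.rpow_le_rpow_of_exponent_le hc (by push_cast; linarith)
  have hlin : c ^ (-3 * (1 - 1 / s.toReal)) * (c ^ (κ + 1)) ^ (1 / r.toReal) ≤ c ^ (-κ) := by
    rw [← Real.rpow_mul hc0.le, ← Real.rpow_add hc0]
    exact Real.rpow_le_rpow_of_exponent_le hc (by linarith)
  have hquad : c * (c ^ (κ + 1))⁻¹ = c ^ (-κ) := by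
    rw [← Real.rpow_neg hc0.le, ← Real.rpow_one_add' hc0.le (by linarith)]
    ring_nf
  rw [Real.norm_eq_abs, Real.norm_of_nonneg (by positivity)]
  calc |∫ x, ∑ i, u₀ x i * ψ (c • x) i|
      ≤ K * (c ^ (-3 * (1 - 1 / s.toReal)) * (c ^ (κ + 1)) ^ (1 / r.toReal) +
          c * (c ^ (κ + 1))⁻¹) := hbound c _ hc0 hsq (inv_le_of_inv_le₀ hT hcT)
    _ ≤ K * (c ^ (-κ) + c ^ (-κ)) := by rw [hquad]; gcongr
    _ = K * 2 * c ^ (-κ) := by ring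

lemma SolenoidalProfile.isMeagre_setOf_inner_dilate_isBigO {ψ : SolenoidalProfile}
    (hψ : ψ.toL2 ≠ 0) {α : Type*} {l : Filter α} [l.IsCountablyGenerated] [l.NeBot] {c : α → ℝ}
    (hc : ∀ a, 0 < c a) (hcl : Tendsto c l atTop) {κ : ℝ} (hκ : 3 / 2 < κ) :
    IsMeagre {v : solenoidalL2 |
      (fun a => inner ℝ (ψ.dilate (hc a).ne').toL2 v) =O[l] fun a => c a ^ (-κ)} := by
  refine isMeagre_setOf_apply_isBigO
    (f := fun a => innerSL ℝ (ψ.dilate (hc a).ne').toL2) fun hO => ?_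
  have hψ0 : ‖ψ.toL2‖ ≠ 0 := norm_ne_zero_iff.2 hψ
  refine not_rpow_isBigO_rpow hcl (neg_lt_neg hκ)
    (IsBigO.trans (.of_bound ‖ψ.toL2‖⁻¹ (.of_forall fun a => ?_)) hO)
  rw [innerSL_apply_norm, ψ.norm_toL2_dilate (hc a), norm_mul, norm_norm, mul_left_comm,
    inv_mul_cancel₀ hψ0, mul_one]

theorem stmt_6_general {r s : ℝ≥0∞} (h : 5 / (3 * r) + 2 / s < 1) (ν : ℝ) :
    IsMeagre {u₀ : L2σ | ∃ T : ℝ, 0 < T ∧ ∃ u,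
      IsVeryWeakNS ν ((u₀ : Lp E3 2 (volume : Measure E3)) : E3 → E3) u ∧
      mixedNorm r s (Ioo 0 T) u < ∞} := by
  obtain ⟨ψ, x, hψx⟩ := SolenoidalProfile.exists_ne_zero
  obtain ⟨κ, hκ, hκrs⟩ := exists_decay_exponent h
  obtain ⟨hr, hs⟩ := one_le_exponents h
  have htendsto : Tendsto (fun n : ℕ => (n : ℝ) + 1) atTop atTop :=
    tendsto_atTop_add_const_right _ _ tendsto_natCast_atTop_atTop
  refine (ψ.isMeagre_setOf_inner_dilate_isBigO (ψ.toL2_ne_zero hψx)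
    (fun n => n.cast_add_one_pos) htendsto hκ).mono ?_
  rintro u₀ ⟨T, hT, u, hu, hfin⟩
  change (fun n : ℕ => inner ℝ _ u₀) =O[atTop] _
  simp only [SolenoidalProfile.inner_toL2]
  exact (hu.integral_isBigO_rpow hr hs hT hfin.ne ψ (by linarith) hκrs).comp_tendsto htendsto

end GenericData

/-- If `5/(3r) + 2/s < 1` then, for a Baire-generic datum in `L²_σ`, no weak solution
belongs to `L^r(0,T;L^s)` for any `T > 0`. -/
theorem stmt_6 (r s : ℝ≥0∞) (hr : 4/3 < r) (hs : 4/3 < s) (ν₀ : ℝ) (hν₀ : 0 < ν₀)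
    (h : 5/(3*r) + 2/s < 1) :
    IsMeagre {u₀ : L2σ | ∃ T : ℝ, 0 < T ∧ ∃ u G,
      IsWeakNS ν₀ ((u₀ : Lp E3 2 (volume : Measure E3)) : E3 → E3) u G ∧
      mixedNorm r s (Ioo 0 T) u < ∞} := by
  refine (stmt_6_general h ν₀).mono ?_
  exact fun _ ⟨T, hT, u, _, hu, hfin⟩ => ⟨T, hT, u, hu.isVeryWeakNS, hfin⟩
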